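/- Assume L ∈ Gr(V,m) satisfies L ∩ int(K) ≠ ∅. Then for any two norms ‖·‖ and |||·||| on V the following chain of inequalities holds: 1 ≤ min{|||u|||* : v ∈ K, u ∈ K*, |||v||| = 1, ⟨u,v⟩ = 1} ≤ σ(L)/ν(L) ≤ 1/(min_{u∈K*, |||u|||*=1} max_{v∈K, |||v|||=1} ⟨u,v⟩). -/

import Mathlib

/-!
By conic duality, for `v ∈ K` with `|||v||| = 1`, the inner maximum in the definition of `σ(L)` is
`max {λ_v(x) : x ∈ L, ‖x‖ ≤ 1} = min {‖u - y‖* : u ∈ K*, ⟪u, v⟫ = 1, y ∈ Lᗮ}`,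
whereas, by homogeneity, `ν(L)` is the minimum of `‖u - y‖* / |||u|||*` over `u ∈ K*`, `y ∈ Lᗮ`.

* The bound `1 ≤ min |||u|||*` is the duality inequality `⟪u, v⟫ ≤ |||u|||* |||v|||`.
* The second inequality uses the strong half of the duality (`exists_dual_certificate`): if `S` is
  the inner maximum, there are `u ∈ K*` with `⟪u, v⟫ = 1` and `y ∈ Lᗮ` with `‖y - u‖* ≤ S`, so
  `ν(L) |||u|||* ≤ S`. The functional `u` comes from the Hahn-Banach theorem applied to the gauge
  `q(z) = inf {S ‖x‖ : x ∈ L, x - z ∈ K}`, and a second extension, of `u` restricted to `L`,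
  gives `u - y`.
* The last inequality uses only the weak half (`mul_inner_le_of_sub_smul_mem`):
  `λ_v(x) ⟪u, v⟫ ≤ ‖y - u‖*`.

A point `e ∈ L ∩ int K` satisfies `⟪u, e⟫ ≥ δ |u|` on `K*` for some `δ > 0`, which makes both
denominators strictly positive.
-/

open Module RealInnerProductSpace

/-- `N` is a norm on the real vector space `V`. -/
structure IsNorm (V : Type*) [AddCommGroup V] [Module ℝ V] (N : V → ℝ) : Prop where
  nonneg : ∀ x, 0 ≤ N x
  eq_zero_iff : ∀ x, N x = 0 ↔ x = 0
  smul_eq : ∀ (c : ℝ) (x : V), N (c • x) = |c| * N x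
  add_le : ∀ x y, N (x + y) ≤ N x + N y

/-- `K` is a regular closed convex cone: closed, convex, a cone, pointed and solid. -/
structure IsRegularCone (V : Type*) [NormedAddCommGroup V] [InnerProductSpace ℝ V]
    (K : Set V) : Prop where
  closed : IsClosed K
  convex : Convex ℝ K
  smul_mem : ∀ ⦃c : ℝ⦄, 0 < c → ∀ ⦃x⦄, x ∈ K → c • x ∈ K
  pointed : K ∩ (-K) = {0}
  solid : (interior K).Nonempty

variable {V : Type*} [NormedAddCommGroup V] [InnerProductSpace ℝ V]

/-- The dual norm of `N` with respect to the inner product of `V`. -/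
noncomputable def dualNorm (N : V → ℝ) (u : V) : ℝ :=
  sSup {r : ℝ | ∃ x : V, N x = 1 ∧ r = ⟪u, x⟫}

/-- The dual cone of `K`. -/
def dualCone (K : Set V) : Set V := {u : V | ∀ x ∈ K, 0 ≤ ⟪u, x⟫}

/-- `dist(L1,L2) = max_{x ∈ L1, x ≠ 0} min_{v ∈ L2} |||x - v||| / ‖x‖`,
with `‖·‖ = N` and `|||·||| = N'`. -/
noncomputable def grDist (N N' : V → ℝ) (L1 L2 : Submodule ℝ V) : ℝ :=
  sSup {d : ℝ | ∃ x ∈ L1, x ≠ 0 ∧ d = sInf {c : ℝ | ∃ v ∈ L2, c = N' (x - v) / N x}}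

/-- `odist(L1,L2) = max_{x ∈ L1, x ≠ 0} inf_{v ∈ L2, v ≠ 0} |||x - v||| / ‖v‖`. -/
noncomputable def grOdist (N N' : V → ℝ) (L1 L2 : Submodule ℝ V) : ℝ :=
  sSup {d : ℝ | ∃ x ∈ L1, x ≠ 0 ∧
    d = sInf {c : ℝ | ∃ v ∈ L2, v ≠ 0 ∧ c = N' (x - v) / N v}}

/-- The set `Σ_m` of ill-posed `m`-dimensional subspaces. -/
def SigmaIll (K : Set V) (m : ℕ) : Set (Submodule ℝ V) :=
  {L | finrank ℝ L = m ∧ (L : Set V) ∩ K ≠ {0} ∧ (Lᗮ : Set V) ∩ dualCone K ≠ {0}}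

/-- `dist(L, Σ_m) = inf_{L' ∈ Σ_m} dist(L, L')`. -/
noncomputable def distToIll (N N' : V → ℝ) (K : Set V) (m : ℕ) (L : Submodule ℝ V) : ℝ :=
  sInf {d : ℝ | ∃ L' ∈ SigmaIll K m, d = grDist N N' L L'}

/-- `odist(Σ_m, L) = inf_{L' ∈ Σ_m} odist(L', L)`. -/
noncomputable def odistToIll (N N' : V → ℝ) (K : Set V) (m : ℕ) (L : Submodule ℝ V) : ℝ :=
  sInf {d : ℝ | ∃ L' ∈ SigmaIll K m, d = grOdist N N' L' L}

/-- `ν(L) = min {‖y - u‖* : u ∈ K*, y ∈ L^⊥, |||u|||* = 1}`. -/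
noncomputable def nu (N N' : V → ℝ) (K : Set V) (L : Submodule ℝ V) : ℝ :=
  sInf {r : ℝ | ∃ u ∈ dualCone K, ∃ y ∈ Lᗮ, dualNorm N' u = 1 ∧ r = dualNorm N (y - u)}

/-- `ν̄(L) = min {|||v - x||| : v ∈ K, x ∈ L, ‖x‖ = 1}`. -/
noncomputable def nubar (N N' : V → ℝ) (K : Set V) (L : Submodule ℝ V) : ℝ :=
  sInf {r : ℝ | ∃ v ∈ K, ∃ x ∈ L, N x = 1 ∧ r = N' (v - x)}

/-- `λ_v(x) = sup {t : x - t v ∈ K}`. -/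
noncomputable def lambdaVec (K : Set V) (v x : V) : ℝ := sSup {t : ℝ | x - t • v ∈ K}

/-- `σ(L) = min_{v ∈ K, |||v||| = 1} max_{x ∈ L, ‖x‖ ≤ 1} λ_v(x)`. -/
noncomputable def sigmaMeas (N N' : V → ℝ) (K : Set V) (L : Submodule ℝ V) : ℝ :=
  sInf {r : ℝ | ∃ v ∈ K, N' v = 1 ∧
    r = sSup {c : ℝ | ∃ x ∈ L, N x ≤ 1 ∧ c = lambdaVec K v x}}

/-- `Sym(L) = min_{v ∈ K, ‖v‖ = 1} sup {t ≥ 0 : ∃ x ∈ K, ‖x‖ ≤ 1, x + t v ∈ L}`. -/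
noncomputable def symMeas (N : V → ℝ) (K : Set V) (L : Submodule ℝ V) : ℝ :=
  sInf {r : ℝ | ∃ v ∈ K, N v = 1 ∧
    r = sSup {t : ℝ | 0 ≤ t ∧ ∃ x ∈ K, N x ≤ 1 ∧ x + t • v ∈ L}}

/-- The norm `‖·‖_e` induced by the pair `(K, e)`. -/
noncomputable def inducedNorm (K : Set V) (e : V) (x : V) : ℝ :=
  sInf {α : ℝ | 0 ≤ α ∧ x + α • e ∈ K ∧ -x + α • e ∈ K}

/-! ### Norms and dual norms -/

namespace IsNorm

variable {N : V → ℝ}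

lemma map_zero (hN : IsNorm V N) : N 0 = 0 := (hN.eq_zero_iff 0).2 rfl

lemma pos (hN : IsNorm V N) {x : V} (hx : x ≠ 0) : 0 < N x :=
  lt_of_le_of_ne (hN.nonneg x) fun h => hx ((hN.eq_zero_iff x).1 h.symm)

lemma map_neg (hN : IsNorm V N) (x : V) : N (-x) = N x := by
  have := hN.smul_eq (-1) x
  simpa using this

lemma smul_pos (hN : IsNorm V N) {c : ℝ} (hc : 0 < c) (x : V) : N (c • x) = c * N x := by
  rw [hN.smul_eq, abs_of_pos hc]

lemma map_inv_smul_self (hN : IsNorm V N) {x : V} (hx : x ≠ 0) : N ((N x)⁻¹ • x) = 1 := by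
  rw [hN.smul_pos (inv_pos.2 (hN.pos hx)), inv_mul_cancel₀ (hN.pos hx).ne']

variable [FiniteDimensional ℝ V]

lemma exists_le_mul_norm (hN : IsNorm V N) : ∃ C, ∀ x, N x ≤ C * ‖x‖ := by
  let b := stdOrthonormalBasis ℝ V
  refine ⟨∑ i, N (b i), fun x => ?_⟩
  have hsum : ∀ (s : Finset (Fin (finrank ℝ V))) (f : Fin (finrank ℝ V) → V),
      N (∑ i ∈ s, f i) ≤ ∑ i ∈ s, N (f i) := by
    intro s f
    exact Finset.le_sum_of_subadditive N hN.map_zero.le hN.add_le s f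
  calc N x = N (∑ i, ⟪b i, x⟫ • b i) := by rw [b.sum_repr']
    _ ≤ ∑ i, N (⟪b i, x⟫ • b i) := hsum _ _
    _ ≤ ∑ i, N (b i) * ‖x‖ := by
        refine Finset.sum_le_sum fun i _ => ?_
        rw [hN.smul_eq, mul_comm]
        refine mul_le_mul_of_nonneg_left ?_ (hN.nonneg _)
        have := abs_real_inner_le_norm (b i) x
        rwa [b.orthonormal.1 i, one_mul] at this
    _ = _ := by rw [Finset.sum_mul]

lemma continuous (hN : IsNorm V N) : Continuous N := by
  obtain ⟨C, hC⟩ := hN.exists_le_mul_norm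
  refine (LipschitzWith.of_le_add_mul C.toNNReal fun x y => ?_).continuous
  have h1 := hN.add_le y (x - y)
  have h2 := hC (x - y)
  have h3 : C * ‖x - y‖ ≤ C.toNNReal * dist x y := by
    rw [dist_eq_norm]
    exact mul_le_mul_of_nonneg_right (Real.le_coe_toNNReal C) (norm_nonneg _)
  rw [add_sub_cancel] at h1
  linarith

/-- Equivalence of norms: `N` dominates the Euclidean norm, since it is continuous and positive on
the compact unit sphere. -/
lemma exists_norm_le_mul (hN : IsNorm V N) : ∃ C, 0 < C ∧ ∀ x, ‖x‖ ≤ C * N x := by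
  have : ProperSpace V := FiniteDimensional.proper ℝ V
  rcases (Metric.sphere (0 : V) 1).eq_empty_or_nonempty with h | h
  · refine ⟨1, one_pos, fun x => ?_⟩
    by_cases hx : x = 0
    · simp [hx, hN.map_zero]
    · exfalso
      have : ‖x‖⁻¹ • x ∈ Metric.sphere (0 : V) 1 := by
        simp [norm_smul, hx]
      rw [h] at this
      exact this
  · obtain ⟨z, hz, hmin⟩ := (isCompact_sphere (0 : V) 1).exists_isMinOn h hN.continuous.continuousOn
    have hz0 : z ≠ 0 := by
      rintro rfl
      simp at hz
    have hp := hN.pos hz0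
    refine ⟨(N z)⁻¹, inv_pos.2 hp, fun x => ?_⟩
    by_cases hx : x = 0
    · simp [hx, hN.map_zero]
    · have hx' : 0 < ‖x‖ := norm_pos_iff.2 hx
      have hmem : ‖x‖⁻¹ • x ∈ Metric.sphere (0 : V) 1 := by
        simp [norm_smul, hx]
      have h1 : N z ≤ ‖x‖⁻¹ * N x := by
        rw [← hN.smul_pos (inv_pos.2 hx')]
        exact hmin hmem
      rw [le_inv_mul_iff₀ hx'] at h1
      rwa [le_inv_mul_iff₀ hp, mul_comm]

end IsNorm

section DualNorm

variable {N : V → ℝ}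

lemma dualNorm_le {u : V} {B : ℝ} (hB : 0 ≤ B)
    (h : ∀ x, ⟪u, x⟫ ≤ B * N x) : dualNorm N u ≤ B := by
  refine Real.sSup_le ?_ hB
  rintro r ⟨x, hx, rfl⟩
  simpa [hx] using h x

variable [FiniteDimensional ℝ V]

lemma inner_le_dualNorm_mul (hN : IsNorm V N) (u x : V) : ⟪u, x⟫ ≤ dualNorm N u * N x := by
  by_cases hx : x = 0
  · simp [hx, hN.map_zero]
  obtain ⟨C, hC, hCN⟩ := hN.exists_norm_le_mul
  have hbdd : BddAbove {r : ℝ | ∃ x : V, N x = 1 ∧ r = ⟪u, x⟫} := by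
    refine ⟨‖u‖ * C, ?_⟩
    rintro r ⟨z, hz, rfl⟩
    refine (real_inner_le_norm u z).trans (mul_le_mul_of_nonneg_left ?_ (norm_nonneg _))
    simpa [hz] using hCN z
  have h1 : ⟪u, (N x)⁻¹ • x⟫ ≤ dualNorm N u := le_csSup hbdd ⟨_, hN.map_inv_smul_self hx, rfl⟩
  rw [real_inner_smul_right, inv_mul_le_iff₀ (hN.pos hx), mul_comm] at h1
  exact h1

lemma dualNorm_pos (hN : IsNorm V N) {u : V} (hu : u ≠ 0) : 0 < dualNorm N u := by
  have h := inner_le_dualNorm_mul hN u u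
  have h1 : 0 < ⟪u, u⟫ := real_inner_self_pos.2 hu
  exact pos_of_mul_pos_left (h1.trans_le h) (hN.nonneg u)

lemma dualNorm_nonneg (hN : IsNorm V N) (u : V) : 0 ≤ dualNorm N u := by
  by_cases hu : u = 0
  · subst hu
    refine Real.sSup_nonneg ?_
    rintro r ⟨x, -, rfl⟩
    simp
  · exact (dualNorm_pos hN hu).le

lemma dualNorm_smul_le (hN : IsNorm V N) {c : ℝ} (hc : 0 < c) (u : V) :
    dualNorm N (c • u) ≤ c * dualNorm N u := by
  refine dualNorm_le (mul_nonneg hc.le (dualNorm_nonneg hN u)) fun x => ?_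
  rw [real_inner_smul_left, mul_assoc]
  exact mul_le_mul_of_nonneg_left (inner_le_dualNorm_mul hN u x) hc.le

lemma dualNorm_smul (hN : IsNorm V N) {c : ℝ} (hc : 0 < c) (u : V) :
    dualNorm N (c • u) = c * dualNorm N u := by
  refine le_antisymm (dualNorm_smul_le hN hc u) ?_
  have h := dualNorm_smul_le hN (inv_pos.2 hc) (c • u)
  rw [smul_smul, inv_mul_cancel₀ hc.ne', one_smul, le_inv_mul_iff₀ hc] at h
  exact h

lemma dualNorm_inv_smul_self (hN : IsNorm V N) {u : V} (hu : u ≠ 0) :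
    dualNorm N ((dualNorm N u)⁻¹ • u) = 1 := by
  have := dualNorm_pos hN hu
  rw [dualNorm_smul hN (inv_pos.2 this), inv_mul_cancel₀ this.ne']

lemma exists_dualNorm_le (hN : IsNorm V N) : ∃ C, 0 < C ∧ ∀ u, dualNorm N u ≤ C * ‖u‖ := by
  obtain ⟨C, hC, hCN⟩ := hN.exists_norm_le_mul
  refine ⟨C, hC, fun u => dualNorm_le (by positivity) fun x => ?_⟩
  calc ⟪u, x⟫ ≤ ‖u‖ * ‖x‖ := real_inner_le_norm u x
    _ ≤ ‖u‖ * (C * N x) := mul_le_mul_of_nonneg_left (hCN x) (norm_nonneg _)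
    _ = C * ‖u‖ * N x := by ring

end DualNorm

/-! ### Regular cones and their duals -/

lemma smul_mem_dualCone {K : Set V} {c : ℝ} (hc : 0 ≤ c) {u : V} (hu : u ∈ dualCone K) :
    c • u ∈ dualCone K := fun x hx => by
  rw [real_inner_smul_left]
  exact mul_nonneg hc (hu x hx)

namespace IsRegularCone

variable {K : Set V}

lemma zero_mem (hK : IsRegularCone V K) : (0 : V) ∈ K := by
  have : (0 : V) ∈ K ∩ -K := by rw [hK.pointed]; rfl
  exact this.1

lemma add_mem (hK : IsRegularCone V K) {x y : V} (hx : x ∈ K) (hy : y ∈ K) : x + y ∈ K := by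
  have h := hK.convex hx hy (a := 1 / 2) (b := 1 / 2) (by norm_num) (by norm_num) (by norm_num)
  have h2 := hK.smul_mem (c := 2) two_pos h
  simpa [smul_smul] using h2

lemma neg_notMem (hK : IsRegularCone V K) {v : V} (hv : v ∈ K) (hv0 : v ≠ 0) : -v ∉ K := by
  intro h
  have : v ∈ K ∩ -K := ⟨hv, h⟩
  rw [hK.pointed] at this
  exact hv0 this

lemma exists_smul_sub_mem (hK : IsRegularCone V K) {e : V} (he : e ∈ interior K) (z : V) :
    ∃ t : ℝ, 0 < t ∧ t • e - z ∈ K := by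
  obtain ⟨δ, hδ, hball⟩ := Metric.isOpen_iff.1 isOpen_interior e he
  set t : ℝ := (‖z‖ + 1) / δ with ht
  have htpos : 0 < t := by positivity
  refine ⟨t, htpos, ?_⟩
  have h1 : e - t⁻¹ • z ∈ K := by
    refine interior_subset (hball ?_)
    rw [mem_ball_iff_norm, sub_sub_cancel_left, norm_neg, norm_smul, Real.norm_eq_abs,
      abs_of_pos (inv_pos.2 htpos), inv_mul_lt_iff₀ htpos, ht, div_mul_cancel₀ _ hδ.ne']
    linarith
  have h2 := hK.smul_mem htpos h1
  rwa [smul_sub, smul_smul, mul_inv_cancel₀ htpos.ne', one_smul] at h2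

lemma ne_zero_of_mem_interior (hK : IsRegularCone V K) {e w : V} (he : e ∈ interior K)
    (hw : w ≠ 0) : e ≠ 0 := by
  rintro rfl
  obtain ⟨t, -, h1⟩ := hK.exists_smul_sub_mem he w
  obtain ⟨s, -, h2⟩ := hK.exists_smul_sub_mem he (-w)
  rw [smul_zero, zero_sub] at h1 h2
  rw [neg_neg] at h2
  exact hK.neg_notMem h2 hw h1

/-- An interior point of `K` pairs uniformly positively with the dual cone. -/
lemma exists_mul_norm_le_inner {e : V} (he : e ∈ interior K) :
    ∃ δ, 0 < δ ∧ ∀ u ∈ dualCone K, δ * ‖u‖ ≤ ⟪u, e⟫ := by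
  obtain ⟨δ, hδ, hball⟩ := Metric.isOpen_iff.1 isOpen_interior e he
  refine ⟨δ / 2, by positivity, fun u hu => ?_⟩
  by_cases hu0 : u = 0
  · simp [hu0]
  have hn : 0 < ‖u‖ := norm_pos_iff.2 hu0
  have hmem : e - (δ / 2 / ‖u‖) • u ∈ K := by
    refine interior_subset (hball ?_)
    rw [mem_ball_iff_norm, sub_sub_cancel_left, norm_neg, norm_smul, Real.norm_eq_abs,
      abs_of_pos (by positivity), div_mul_cancel₀ _ hn.ne']
    linarith
  have h := hu _ hmem
  rw [inner_sub_right, real_inner_smul_right, real_inner_self_eq_norm_sq] at h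
  have h2 : δ / 2 / ‖u‖ * ‖u‖ ^ 2 = δ / 2 * ‖u‖ := by
    field_simp
  linarith

variable [FiniteDimensional ℝ V]

/-- Separating `-v` from `K` yields a dual vector that is positive at `v`. -/
lemma exists_dual_inner_pos (hK : IsRegularCone V K) {v : V} (hv : v ∈ K) (hv0 : v ≠ 0) :
    ∃ u ∈ dualCone K, 0 < ⟪u, v⟫ := by
  have : CompleteSpace V := FiniteDimensional.complete ℝ V
  obtain ⟨f, s, hs, hf⟩ :=
    geometric_hahn_banach_point_closed hK.convex hK.closed (hK.neg_notMem hv hv0)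
  have hs0 : s < 0 := by simpa using hf 0 hK.zero_mem
  refine ⟨(InnerProductSpace.toDual ℝ V).symm f, fun x hx => ?_, ?_⟩
  · rw [InnerProductSpace.toDual_symm_apply]
    by_contra! hneg
    have hc : 0 < s / f x := div_pos_of_neg_of_neg hs0 hneg
    have := hf _ (hK.smul_mem hc hx)
    rw [map_smul, smul_eq_mul, div_mul_cancel₀ _ hneg.ne] at this
    exact lt_irrefl _ this
  · rw [InnerProductSpace.toDual_symm_apply]
    rw [map_neg] at hs
    linarith

end IsRegularCone

/-! ### Conic duality -/

section Duality

variable {N : V → ℝ} {K : Set V} {L : Submodule ℝ V}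

/-- Weak duality for the problem `max {t : x - t v ∈ K, x ∈ L, ‖x‖ ≤ 1}`. -/
lemma mul_inner_le_of_sub_smul_mem [FiniteDimensional ℝ V] (hN : IsNorm V N) {u y v x : V} {t : ℝ}
    (hu : u ∈ dualCone K) (hy : y ∈ Lᗮ) (hx : x ∈ L) (hNx : N x ≤ 1) (h : x - t • v ∈ K) :
    t * ⟪u, v⟫ ≤ dualNorm N (y - u) := by
  have h1 := hu _ h
  rw [inner_sub_right, real_inner_smul_right] at h1
  have h2 := inner_le_dualNorm_mul hN (y - u) (-x)
  have hxy : ⟪y, x⟫ = 0 := Submodule.inner_left_of_mem_orthogonal hx hy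
  rw [hN.map_neg, inner_neg_right, inner_sub_left, hxy] at h2
  have h3 := mul_le_mul_of_nonneg_left hNx (dualNorm_nonneg hN (y - u))
  linarith

/-- Every feasible `t` is at most the inner maximum of `σ(L)`: the suprema defining `λ_v(x)` and
the maximum over `x` are both finite, by weak duality. -/
lemma le_sSup_lambdaVec [FiniteDimensional ℝ V] (hN : IsNorm V N) (hK : IsRegularCone V K) {v x : V} {t : ℝ}
    (hv : v ∈ K) (hv0 : v ≠ 0) (hx : x ∈ L) (hNx : N x ≤ 1) (h : x - t • v ∈ K) :
    t ≤ sSup {c : ℝ | ∃ x ∈ L, N x ≤ 1 ∧ c = lambdaVec K v x} := by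
  obtain ⟨u, hu, huv⟩ := hK.exists_dual_inner_pos hv hv0
  have key : ∀ z ∈ L, N z ≤ 1 → ∀ s : ℝ, z - s • v ∈ K → s ≤ dualNorm N (0 - u) / ⟪u, v⟫ := by
    intro z hz hNz s hs
    rw [le_div_iff₀ huv]
    exact mul_inner_le_of_sub_smul_mem hN hu (Submodule.zero_mem Lᗮ) hz hNz hs
  have h1 : t ≤ lambdaVec K v x := le_csSup ⟨_, fun s hs => key x hx hNx s hs⟩ h
  refine h1.trans (le_csSup ⟨dualNorm N (0 - u) / ⟪u, v⟫, ?_⟩ ⟨x, hx, hNx, rfl⟩)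
  rintro c ⟨z, hz, hNz, rfl⟩
  exact Real.sSup_le (fun s hs => key z hz hNz s hs) (div_nonneg (dualNorm_nonneg hN _) huv.le)

lemma sSup_lambdaVec_nonneg (hN : IsNorm V N) (hK : IsRegularCone V K) (v : V) :
    0 ≤ sSup {c : ℝ | ∃ x ∈ L, N x ≤ 1 ∧ c = lambdaVec K v x} := by
  refine Real.sSup_nonneg' ⟨lambdaVec K v 0, ⟨0, L.zero_mem, by simp [hN.map_zero], rfl⟩, ?_⟩
  refine Real.sSup_nonneg' ⟨0, ?_, le_rfl⟩
  simpa using hK.zero_mem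

/-- The gauge `q(z) = inf {S ‖x‖ : x ∈ L, x - z ∈ K}`. When `L` meets the interior of `K` the
infimum is over a nonempty set for every `z`, and a linear functional lies below `q` exactly
when it is nonnegative on `K` and at most `S ‖·‖` on `L`. -/
noncomputable def coneGauge (N : V → ℝ) (K : Set V) (L : Submodule ℝ V) (S : ℝ) (z : V) : ℝ :=
  sInf {r : ℝ | ∃ x ∈ L, x - z ∈ K ∧ r = S * N x}

lemma coneGauge_le (hN : IsNorm V N) {S : ℝ} (hS : 0 ≤ S) {x z : V} (hx : x ∈ L)
    (h : x - z ∈ K) : coneGauge N K L S z ≤ S * N x := by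
  refine csInf_le ⟨0, ?_⟩ ⟨x, hx, h, rfl⟩
  rintro r ⟨w, -, -, rfl⟩
  exact mul_nonneg hS (hN.nonneg w)

lemma le_coneGauge (hK : IsRegularCone V K) {e : V} (heL : e ∈ L) (he : e ∈ interior K)
    {S B : ℝ} {z : V} (h : ∀ x ∈ L, x - z ∈ K → B ≤ S * N x) : B ≤ coneGauge N K L S z := by
  obtain ⟨t, -, ht⟩ := hK.exists_smul_sub_mem he z
  refine le_csInf ⟨_, t • e, L.smul_mem t heL, ht, rfl⟩ ?_
  rintro r ⟨x, hx, hxz, rfl⟩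
  exact h x hx hxz

lemma coneGauge_smul_le (hN : IsNorm V N) (hK : IsRegularCone V K) {e : V} (heL : e ∈ L)
    (he : e ∈ interior K) {S : ℝ} (hS : 0 ≤ S) {c : ℝ} (hc : 0 < c) (z : V) :
    coneGauge N K L S (c • z) ≤ c * coneGauge N K L S z := by
  rw [← inv_mul_le_iff₀ hc]
  refine le_coneGauge hK heL he fun x hx hxz => ?_
  rw [inv_mul_le_iff₀ hc]
  have := coneGauge_le hN hS (z := c • z) (L.smul_mem c hx)
    (by rw [← smul_sub]; exact hK.smul_mem hc hxz)
  rw [hN.smul_pos hc] at this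
  linarith

lemma coneGauge_smul (hN : IsNorm V N) (hK : IsRegularCone V K) {e : V} (heL : e ∈ L)
    (he : e ∈ interior K) {S : ℝ} (hS : 0 ≤ S) {c : ℝ} (hc : 0 < c) (z : V) :
    coneGauge N K L S (c • z) = c * coneGauge N K L S z := by
  refine le_antisymm (coneGauge_smul_le hN hK heL he hS hc z) ?_
  have h := coneGauge_smul_le hN hK heL he hS (inv_pos.2 hc) (c • z)
  rwa [smul_smul, inv_mul_cancel₀ hc.ne', one_smul, le_inv_mul_iff₀ hc] at h

lemma coneGauge_add_le (hN : IsNorm V N) (hK : IsRegularCone V K) {e : V} (heL : e ∈ L)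
    (he : e ∈ interior K) {S : ℝ} (hS : 0 ≤ S) (z w : V) :
    coneGauge N K L S (z + w) ≤ coneGauge N K L S z + coneGauge N K L S w := by
  rw [← sub_le_iff_le_add]
  refine le_coneGauge hK heL he fun x hx hxz => ?_
  rw [sub_le_comm]
  refine le_coneGauge hK heL he fun x' hx' hxz' => ?_
  rw [sub_le_iff_le_add]
  have h1 := coneGauge_le hN hS (z := z + w) (L.add_mem hx' hx)
    (by rw [show x' + x - (z + w) = (x - z) + (x' - w) by abel]; exact hK.add_mem hxz hxz')
  have h2 := mul_le_mul_of_nonneg_left (hN.add_le x' x) hS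
  linarith

/-- Strong duality for the problem `max {t : x - t v ∈ K, x ∈ L, ‖x‖ ≤ 1}`: any upper bound `S`
for its value is certified by a dual feasible pair `(u, y)`. -/
lemma exists_dual_certificate [FiniteDimensional ℝ V] (hN : IsNorm V N) (hK : IsRegularCone V K) {e : V} (heL : e ∈ L)
    (he : e ∈ interior K) {v : V} (hv : v ∈ K) (hv0 : v ≠ 0) {S : ℝ} (hS : 0 ≤ S)
    (h : ∀ x ∈ L, N x ≤ 1 → ∀ t : ℝ, x - t • v ∈ K → t ≤ S) :
    ∃ u ∈ dualCone K, ∃ y ∈ Lᗮ, ⟪u, v⟫ = 1 ∧ dualNorm N (y - u) ≤ S := by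
  have : CompleteSpace V := FiniteDimensional.complete ℝ V
  have hq0 : ∀ z, 0 ≤ coneGauge N K L S z := fun z =>
    le_coneGauge hK heL he fun x _ _ => mul_nonneg hS (hN.nonneg x)
  have hqv : 1 ≤ coneGauge N K L S v := by
    refine le_coneGauge hK heL he fun x hx hxv => ?_
    have hx0 : x ≠ 0 := by
      rintro rfl
      rw [zero_sub] at hxv
      exact hK.neg_notMem hv hv0 hxv
    have hp := inv_pos.2 (hN.pos hx0)
    have h1 := h ((N x)⁻¹ • x) (L.smul_mem _ hx) (hN.map_inv_smul_self hx0).le (N x)⁻¹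
      (by rw [← smul_sub]; exact hK.smul_mem hp hxv)
    rwa [inv_le_iff_one_le_mul₀ (hN.pos hx0)] at h1
  obtain ⟨g, hg1, hg2⟩ := exists_extension_of_le_sublinear
    (LinearPMap.mkSpanSingleton (K := ℝ) v (1 : ℝ) hv0) (coneGauge N K L S)
    (fun c hc z => coneGauge_smul hN hK heL he hS hc z)
    (coneGauge_add_le hN hK heL he hS) (by
      rintro ⟨x, hx⟩
      obtain ⟨t, rfl⟩ := Submodule.mem_span_singleton.1 hx
      have hval : LinearPMap.mkSpanSingleton (K := ℝ) v (1 : ℝ) hv0 ⟨t • v, hx⟩ = t := by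
        have h1 := LinearPMap.mkSpanSingleton'_apply (σ := RingHom.id ℝ) v (1 : ℝ)
          (fun c hc => by simpa [hv0] using hc) t hx
        rwa [RingHom.id_apply, smul_eq_mul, mul_one] at h1
      rw [hval]
      rcases le_or_gt t 0 with ht | ht
      · exact ht.trans (hq0 _)
      · change t ≤ coneGauge N K L S (t • v)
        rw [coneGauge_smul hN hK heL he hS ht]
        nlinarith)
  have hgv : g v = 1 := by
    have h1 := hg1 ⟨v, Submodule.mem_span_singleton_self v⟩
    rwa [LinearPMap.mkSpanSingleton_apply] at h1
  have hgL : ∀ x ∈ L, g x ≤ S * N x := fun x hx =>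
    (hg2 x).trans (coneGauge_le hN hS hx (by simpa using hK.zero_mem))
  have hgK : ∀ x ∈ K, 0 ≤ g x := by
    intro x hx
    have h1 := (hg2 (-x)).trans (coneGauge_le hN hS L.zero_mem (by simpa using hx))
    rw [hN.map_zero, mul_zero, map_neg] at h1
    linarith
  obtain ⟨w, hw1, hw2⟩ := exists_extension_of_le_sublinear
    (⟨L, g ∘ₗ L.subtype⟩ : V →ₗ.[ℝ] ℝ) (fun x => S * N x)
    (fun c hc z => by rw [hN.smul_pos hc]; ring)
    (fun x y => by
      have := mul_le_mul_of_nonneg_left (hN.add_le x y) hS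
      linarith)
    (fun x => hgL x x.2)
  have hrep : ∀ f : V →ₗ[ℝ] ℝ, ∃ u : V, ∀ x, ⟪u, x⟫ = f x := fun f =>
    ⟨(InnerProductSpace.toDual ℝ V).symm (LinearMap.toContinuousLinearMap f), fun x => by
      rw [InnerProductSpace.toDual_symm_apply]; rfl⟩
  obtain ⟨u, hu⟩ := hrep g
  obtain ⟨p, hp⟩ := hrep w
  refine ⟨u, fun x hx => by rw [hu]; exact hgK x hx, u - p, ?_, by rw [hu, hgv], ?_⟩
  · rw [Submodule.mem_orthogonal']
    intro x hx
    rw [inner_sub_left, hu, hp]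
    have h1 : w x = g x := hw1 ⟨x, hx⟩
    rw [h1, sub_self]
  · refine dualNorm_le hS fun x => ?_
    rw [sub_sub_cancel_left, inner_neg_left, ← inner_neg_right, hp, ← hN.map_neg x]
    exact hw2 (-x)

end Duality

/-! ### The chain of inequalities -/

/-- For any two norms, if `L ∩ int K ≠ ∅` then
`1 ≤ min {|||u|||* : v ∈ K, u ∈ K*, |||v||| = 1, ⟨u,v⟩ = 1} ≤ σ(L)/ν(L)
   ≤ 1 / (min_{u ∈ K*, |||u|||* = 1} max_{v ∈ K, |||v||| = 1} ⟨u,v⟩)`. -/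
theorem stmt_12 {V : Type*} [NormedAddCommGroup V] [InnerProductSpace ℝ V]
    [FiniteDimensional ℝ V]
    (N N' : V → ℝ) (hN : IsNorm V N) (hN' : IsNorm V N')
    (K : Set V) (hK : IsRegularCone V K)
    (m : ℕ) (hm : m < finrank ℝ V)
    (L : Submodule ℝ V) (hL : finrank ℝ L = m)
    (hint : ((L : Set V) ∩ interior K).Nonempty) :
    1 ≤ sInf {r : ℝ | ∃ v ∈ K, ∃ u ∈ dualCone K,
        N' v = 1 ∧ ⟪u, v⟫ = 1 ∧ r = dualNorm N' u} ∧
    sInf {r : ℝ | ∃ v ∈ K, ∃ u ∈ dualCone K,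
        N' v = 1 ∧ ⟪u, v⟫ = 1 ∧ r = dualNorm N' u} ≤
      sigmaMeas N N' K L / nu N N' K L ∧
    sigmaMeas N N' K L / nu N N' K L ≤
      1 / sInf {r : ℝ | ∃ u ∈ dualCone K, dualNorm N' u = 1 ∧
        r = sSup {c : ℝ | ∃ v ∈ K, N' v = 1 ∧ c = ⟪u, v⟫}} := by
  obtain ⟨e, heL, he⟩ := hint
  replace heL : e ∈ L := heL
  have heK : e ∈ K := interior_subset he
  have : Nontrivial V := Module.nontrivial_of_finrank_pos (R := ℝ) (by omega)
  obtain ⟨z, hz⟩ := exists_ne (0 : V)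
  have he0 : e ≠ 0 := hK.ne_zero_of_mem_interior he hz
  have hNe := hN.pos he0
  have hNe' := hN'.pos he0
  obtain ⟨δ, hδ, hδu⟩ := IsRegularCone.exists_mul_norm_le_inner he
  obtain ⟨A, hA, hAu⟩ := exists_dualNorm_le hN'
  have hue : ∀ u ∈ dualCone K, dualNorm N' u = 1 → δ / A ≤ ⟪u, e⟫ := by
    intro u hu hu1
    refine le_trans ?_ (hδu u hu)
    rw [div_le_iff₀ hA]
    have := mul_le_mul_of_nonneg_left (hAu u) hδ.le
    rw [hu1] at this
    linarith
  obtain ⟨u₀, hu₀, hu₀e⟩ := hK.exists_dual_inner_pos heK he0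
  have hu₀0 : u₀ ≠ 0 := by
    rintro rfl
    simp at hu₀e
  -- A normalised dual vector, witnessing that the sets of the infima over `K*` are nonempty.
  obtain ⟨u₁, hu₁, hu₁1⟩ : ∃ u ∈ dualCone K, dualNorm N' u = 1 :=
    ⟨_, smul_mem_dualCone (inv_pos.2 (dualNorm_pos hN' hu₀0)).le hu₀,
      dualNorm_inv_smul_self hN' hu₀0⟩
  set v₀ : V := (N' e)⁻¹ • e with hv₀
  have hv₀K : v₀ ∈ K := hK.smul_mem (inv_pos.2 hNe') heK
  have hv₀1 : N' v₀ = 1 := hN'.map_inv_smul_self he0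
  have hν_bdd : BddBelow
      {r : ℝ | ∃ u ∈ dualCone K, ∃ y ∈ Lᗮ, dualNorm N' u = 1 ∧ r = dualNorm N (y - u)} := by
    refine ⟨0, ?_⟩
    rintro r ⟨u, -, y, -, -, rfl⟩
    exact dualNorm_nonneg hN _
  have hν_ne : {r : ℝ | ∃ u ∈ dualCone K, ∃ y ∈ Lᗮ,
      dualNorm N' u = 1 ∧ r = dualNorm N (y - u)}.Nonempty :=
    ⟨_, u₁, hu₁, 0, Submodule.zero_mem _, hu₁1, rfl⟩
  -- Since `y ⊥ e`, the uniformly positive number `⟪u, e⟫` is at most `‖y - u‖* ‖e‖`.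
  have hν : 0 < nu N N' K L := by
    refine lt_of_lt_of_le (div_pos (div_pos hδ hA) hNe) (le_csInf hν_ne ?_)
    rintro r ⟨u, hu, y, hy, hu1, rfl⟩
    rw [div_le_iff₀ hNe]
    refine (hue u hu hu1).trans ?_
    have h2 := inner_le_dualNorm_mul hN (y - u) (-e)
    rw [hN.map_neg, inner_neg_right, inner_sub_left,
      Submodule.inner_left_of_mem_orthogonal heL hy] at h2
    linarith
  have hσ_ne : {r : ℝ | ∃ v ∈ K, N' v = 1 ∧
      r = sSup {c : ℝ | ∃ x ∈ L, N x ≤ 1 ∧ c = lambdaVec K v x}}.Nonempty :=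
    ⟨_, v₀, hv₀K, hv₀1, rfl⟩
  have hσ_bdd : BddBelow {r : ℝ | ∃ v ∈ K, N' v = 1 ∧
      r = sSup {c : ℝ | ∃ x ∈ L, N x ≤ 1 ∧ c = lambdaVec K v x}} := by
    refine ⟨0, ?_⟩
    rintro r ⟨v, -, -, rfl⟩
    exact sSup_lambdaVec_nonneg hN hK v
  have hσ0 : 0 ≤ sigmaMeas N N' K L := by
    refine le_csInf hσ_ne ?_
    rintro r ⟨v, -, -, rfl⟩
    exact sSup_lambdaVec_nonneg hN hK v
  have hone : ∀ r ∈ {r : ℝ | ∃ v ∈ K, ∃ u ∈ dualCone K,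
      N' v = 1 ∧ ⟪u, v⟫ = 1 ∧ r = dualNorm N' u}, 1 ≤ r := by
    rintro r ⟨v, -, u, -, hv1, huv, rfl⟩
    have := inner_le_dualNorm_mul hN' u v
    rwa [huv, hv1, mul_one] at this
  refine ⟨le_csInf ?_ hone, ?_, ?_⟩
  · have hpos : 0 < ⟪u₀, v₀⟫ := by
      rw [hv₀, real_inner_smul_right]
      positivity
    refine ⟨_, v₀, hv₀K, (⟪u₀, v₀⟫)⁻¹ • u₀, smul_mem_dualCone (inv_pos.2 hpos).le hu₀, hv₀1, ?_,
      rfl⟩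
    rw [real_inner_smul_left, inv_mul_cancel₀ hpos.ne']
  · rw [le_div_iff₀ hν]
    refine le_csInf hσ_ne ?_
    rintro r ⟨v, hv, hv1, rfl⟩
    have hv0 : v ≠ 0 := by
      rintro rfl
      rw [hN'.map_zero] at hv1
      exact zero_ne_one hv1
    obtain ⟨u, hu, y, hy, huv, hle⟩ := exists_dual_certificate hN hK heL he hv hv0
      (sSup_lambdaVec_nonneg (L := L) hN hK v)
      (fun x hx hNx t ht => le_sSup_lambdaVec hN hK hv hv0 hx hNx ht)
    refine le_trans ?_ hle
    have hu0 : u ≠ 0 := by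
      rintro rfl
      simp at huv
    have ha := dualNorm_pos hN' hu0
    have h1 : sInf {r : ℝ | ∃ v ∈ K, ∃ u ∈ dualCone K,
        N' v = 1 ∧ ⟪u, v⟫ = 1 ∧ r = dualNorm N' u} ≤ dualNorm N' u :=
      csInf_le ⟨1, hone⟩ ⟨v, hv, u, hu, hv1, huv, rfl⟩
    have h2 : nu N N' K L ≤ (dualNorm N' u)⁻¹ * dualNorm N (y - u) := by
      rw [← dualNorm_smul hN (inv_pos.2 ha), smul_sub]
      exact csInf_le hν_bdd ⟨_, smul_mem_dualCone (inv_pos.2 ha).le hu, _,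
        Submodule.smul_mem _ _ hy, dualNorm_inv_smul_self hN' hu0, rfl⟩
    rw [le_inv_mul_iff₀ ha] at h2
    exact (mul_le_mul_of_nonneg_right h1 hν.le).trans h2
  · have hbdd : ∀ u : V, BddAbove {c : ℝ | ∃ v ∈ K, N' v = 1 ∧ c = ⟪u, v⟫} := by
      intro u
      refine ⟨dualNorm N' u, ?_⟩
      rintro c ⟨v, -, hv1, rfl⟩
      have := inner_le_dualNorm_mul hN' u v
      rwa [hv1, mul_one] at this
    have hlow : ∀ u ∈ dualCone K, dualNorm N' u = 1 →
        δ / A / N' e ≤ sSup {c : ℝ | ∃ v ∈ K, N' v = 1 ∧ c = ⟪u, v⟫} := by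
      intro u hu hu1
      refine le_trans ?_ (le_csSup (hbdd u) ⟨v₀, hv₀K, hv₀1, rfl⟩)
      rw [hv₀, real_inner_smul_right, div_eq_inv_mul]
      exact mul_le_mul_of_nonneg_left (hue u hu hu1) (inv_pos.2 hNe').le
    have hc : 0 < sInf {r : ℝ | ∃ u ∈ dualCone K, dualNorm N' u = 1 ∧
        r = sSup {c : ℝ | ∃ v ∈ K, N' v = 1 ∧ c = ⟪u, v⟫}} := by
      refine lt_of_lt_of_le (div_pos (div_pos hδ hA) hNe') (le_csInf ⟨_, u₁, hu₁, hu₁1, rfl⟩ ?_)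
      rintro r ⟨u, hu, hu1, rfl⟩
      exact hlow u hu hu1
    rw [div_le_div_iff₀ hν hc, one_mul]
    refine le_csInf hν_ne ?_
    rintro r ⟨u, hu, y, hy, hu1, rfl⟩
    have hcle : sInf {r : ℝ | ∃ u ∈ dualCone K, dualNorm N' u = 1 ∧
        r = sSup {c : ℝ | ∃ v ∈ K, N' v = 1 ∧ c = ⟪u, v⟫}} ≤
        sSup {c : ℝ | ∃ v ∈ K, N' v = 1 ∧ c = ⟪u, v⟫} := by
      refine csInf_le ⟨0, ?_⟩ ⟨u, hu, hu1, rfl⟩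
      rintro r ⟨w, hw, hw1, rfl⟩
      exact le_trans (by positivity) (hlow w hw hw1)
    refine (mul_le_mul_of_nonneg_left hcle hσ0).trans ?_
    have key : ∀ v ∈ K, N' v = 1 → sigmaMeas N N' K L * ⟪u, v⟫ ≤ dualNorm N (y - u) := by
      intro v hv hv1
      rcases (hu v hv).eq_or_lt with h0 | hpos
      · rw [← h0, mul_zero]
        exact dualNorm_nonneg hN _
      rw [← le_div_iff₀ hpos]
      refine (csInf_le hσ_bdd ⟨v, hv, hv1, rfl⟩).trans ?_
      have hB : 0 ≤ dualNorm N (y - u) / ⟪u, v⟫ := div_nonneg (dualNorm_nonneg hN _) hpos.le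
      refine Real.sSup_le ?_ hB
      rintro c ⟨x, hx, hNx, rfl⟩
      refine Real.sSup_le (fun t ht => ?_) hB
      rw [le_div_iff₀ hpos]
      exact mul_inner_le_of_sub_smul_mem hN hu hy hx hNx ht
    rcases hσ0.eq_or_lt with h0 | hpos
    · rw [← h0, zero_mul]
      exact dualNorm_nonneg hN _
    · rw [← le_div_iff₀' hpos]
      refine csSup_le ⟨_, v₀, hv₀K, hv₀1, rfl⟩ ?_
      rintro c ⟨v, hv, hv1, rfl⟩
      rw [le_div_iff₀' hpos]
      exact key v hv hv1
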